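/- If a symmetric NE distribution ψ_j has an atom at x > g_j(c) (i.e., positive probability mass at x), then there exists ε > 0 such that φ_j(x − ε) > φ_j(x), contradicting that x is a best response. Formally: let r : ℝ → [0,1] satisfy r(x−ε) ≥ r(x) + γ for all ε > 0 where γ > 0 is fixed, let f be continuous and strictly increasing with f(x) > c. Then there exists ε > 0 with (f(x−ε) − c)·r(x−ε) > (f(x) − c)·r(x). -/

import Mathlib

/-- Core step of Theorem 1 (no atoms): if `r(x−ε) ≥ r(x) + γ` for all `ε > 0`
with fixed `γ > 0`, and `f` is continuous strictly increasing with `f(x) > c`,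
then there exists `ε > 0` with `(f(x−ε) − c)·r(x−ε) > (f(x) − c)·r(x)`. -/
theorem undercut_profitable (c x γ : ℝ) (hγ : 0 < γ)
    (f r : ℝ → ℝ) (hfcont : Continuous f) (hfmono : StrictMono f)
    (hfx : c < f x) (hr : ∀ y, r y ∈ Set.Icc (0 : ℝ) 1)
    (hjump : ∀ ε : ℝ, 0 < ε → r (x - ε) ≥ r x + γ) :
    ∃ ε : ℝ, 0 < ε ∧ (f (x - ε) - c) * r (x - ε) > (f x - c) * r x := by
  have hδ : 0 < (f x - c) * γ := mul_pos (sub_pos.2 hfx) hγ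
  obtain ⟨η, hη, h⟩ := Metric.continuousAt_iff.1 hfcont.continuousAt _ hδ
  have hε : 0 < η / 2 := by positivity
  refine ⟨η / 2, hε, ?_⟩
  have hd : dist (x - η / 2) x < η := by
    rw [Real.dist_eq, show x - η / 2 - x = -(η / 2) by ring, abs_neg, abs_of_pos hε]
    linarith
  have h1 := h hd
  rw [Real.dist_eq] at h1
  have h2 := (abs_lt.1 h1).1
  have h3 : f (x - η / 2) < f x := hfmono (by linarith)
  have h4 := hjump _ hε
  have h5 := (hr (x - η / 2)).2
  have h6 : 0 ≤ (f x - c) * (r (x - η / 2) - r x - γ) :=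
    mul_nonneg (by linarith) (by linarith)
  have h7 : 0 ≤ (f x - f (x - η / 2)) * (1 - r (x - η / 2)) :=
    mul_nonneg (by linarith) (by linarith)
  nlinarith
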